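/- Fix λ₀ > 0. Let ξ = (ξ^h, ξ^c) : [0,1] × [0,∞) → ℂ² be continuously differentiable and satisfy ∂_t ξ^h = −u₁ ∂_x ξ^h − c₁(ξ^h − ξ^c) + λ₀ ξ^h and ∂_t ξ^c = u₂ ∂_x ξ^c + c₂(ξ^h − ξ^c) + λ₀ ξ^c on (0,1) × (0,∞), with ξ^h(0,t) = 0 and ξ^c(1,t) = 0 for all t ≥ 0. If ∫₀^∞ ∫₀¹ (|ξ^h(x,t)|² + |ξ^c(x,t)|²) dx dt < ∞, then the boundary trace t ↦ ξ^c(0,t) is square-integrable on (0,∞) and u₂ ∫₀^∞ |ξ^c(0,t)|² dt ≤ (2|M|₂ + 2λ₀) ∫₀^∞ ∫₀¹ (|ξ^h(x,t)|² + |ξ^c(x,t)|²) dx dt + ∫₀¹ (|ξ^h(x,0)|² + |ξ^c(x,0)|²) dx, where |M|₂ is the spectral norm of M = [[−c₁, c₁], [c₂, −c₂]]. -/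

import Mathlib

open MeasureTheory intervalIntegral Set

/-- The spectral (operator) norm of the coupling matrix `M = [[−c₁, c₁], [c₂, −c₂]]`. -/
noncomputable def specNormM (c₁ c₂ : ℝ) : ℝ :=
  ‖Matrix.toEuclideanCLM (𝕜 := ℝ) !![-c₁, c₁; c₂, -c₂]‖

lemma aux_energy0 (F Ft G Gx : ℝ → ℝ → ℝ) (K T : ℝ) (hT : 0 ≤ T)
    (cF : Continuous (Function.uncurry F)) (cFt : Continuous (Function.uncurry Ft))
    (cG : Continuous (Function.uncurry G)) (cGx : Continuous (Function.uncurry Gx))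
    (hFt : ∀ x ∈ Icc (0:ℝ) 1, ∀ t ∈ Ioo (0:ℝ) T, HasDerivAt (fun s => F x s) (Ft x t) t)
    (hGx : ∀ t ∈ Icc (0:ℝ) T, ∀ x ∈ Ioo (0:ℝ) 1, HasDerivAt (fun s => G s t) (Gx x t) x)
    (hle : ∀ x ∈ Ioo (0:ℝ) 1, ∀ t ∈ Ioo (0:ℝ) T, Ft x t ≤ Gx x t + K * F x t)
    (hF : ∀ x ∈ Icc (0:ℝ) 1, 0 ≤ F x T) :
    ∫ t in (0:ℝ)..T, (G 0 t - G 1 t)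
      ≤ K * (∫ t in (0:ℝ)..T, ∫ x in (0:ℝ)..1, F x t) + ∫ x in (0:ℝ)..1, F x 0 := by
  have h01 : (0:ℝ) ≤ 1 := zero_le_one
  have sec1 : ∀ H : ℝ → ℝ → ℝ, Continuous (Function.uncurry H) → ∀ t, Continuous (fun x => H x t) :=
    fun H hH t => hH.comp (by fun_prop : Continuous fun x : ℝ => (x, t))
  have sec2 : ∀ H : ℝ → ℝ → ℝ, Continuous (Function.uncurry H) → ∀ x, Continuous (fun t => H x t) :=
    fun H hH x => hH.comp (by fun_prop : Continuous fun t : ℝ => (x, t))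
  have par : ∀ H : ℝ → ℝ → ℝ, Continuous (Function.uncurry H) →
      Continuous (fun t => ∫ x in (0:ℝ)..1, H x t) := by
    intro H hH
    apply intervalIntegral.continuous_parametric_intervalIntegral_of_continuous'
      (f := fun t x => H x t)
    exact hH.comp continuous_swap
  have e1 : ∫ x in (0:ℝ)..1, ∫ t in (0:ℝ)..T, Ft x t = ∫ t in (0:ℝ)..T, ∫ x in (0:ℝ)..1, Ft x t := by
    apply intervalIntegral_intervalIntegral_swap
    exact (cFt.continuousOn.integrableOn_compact (isCompact_uIcc.prod isCompact_uIcc)).mono_set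
      (prod_mono uIoc_subset_uIcc uIoc_subset_uIcc)
  have e2 : ∫ x in (0:ℝ)..1, ∫ t in (0:ℝ)..T, Ft x t
      = (∫ x in (0:ℝ)..1, F x T) - ∫ x in (0:ℝ)..1, F x 0 := by
    rw [← intervalIntegral.integral_sub ((sec1 F cF T).intervalIntegrable _ _)
      ((sec1 F cF 0).intervalIntegrable _ _)]
    apply intervalIntegral.integral_congr
    intro x hx
    rw [uIcc_of_le h01] at hx
    exact integral_eq_sub_of_hasDerivAt_of_le hT (sec2 F cF x).continuousOn (hFt x hx)
      ((sec2 Ft cFt x).intervalIntegrable _ _)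
  have e3 : ∫ t in (0:ℝ)..T, (G 1 t - G 0 t) = ∫ t in (0:ℝ)..T, ∫ x in (0:ℝ)..1, Gx x t := by
    apply intervalIntegral.integral_congr
    intro t ht
    rw [uIcc_of_le hT] at ht
    exact (integral_eq_sub_of_hasDerivAt_of_le h01 (sec1 G cG t).continuousOn (hGx t ht)
      ((sec1 Gx cGx t).intervalIntegrable _ _)).symm
  have e4 : ∫ t in (0:ℝ)..T, ∫ x in (0:ℝ)..1, Ft x t
      ≤ ∫ t in (0:ℝ)..T, ((∫ x in (0:ℝ)..1, Gx x t) + K * ∫ x in (0:ℝ)..1, F x t) := by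
    apply intervalIntegral.integral_mono_on_of_le_Ioo hT ((par Ft cFt).intervalIntegrable _ _)
    · exact ((par Gx cGx).add (continuous_const.mul (par F cF))).intervalIntegrable _ _
    intro t ht
    rw [← intervalIntegral.integral_const_mul, ← intervalIntegral.integral_add
      ((sec1 Gx cGx t).intervalIntegrable _ _)
      (((sec1 F cF t).intervalIntegrable _ _).const_mul K)]
    apply intervalIntegral.integral_mono_on_of_le_Ioo h01 ((sec1 Ft cFt t).intervalIntegrable _ _)
    · exact ((sec1 Gx cGx t).add (continuous_const.mul (sec1 F cF t))).intervalIntegrable _ _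
    exact fun x hx => hle x hx t ht
  rw [intervalIntegral.integral_add ((par Gx cGx).intervalIntegrable _ _)
    (((par F cF).intervalIntegrable _ _).const_mul K),
    intervalIntegral.integral_const_mul, ← e3, ← e1, e2] at e4
  have e5 : 0 ≤ ∫ x in (0:ℝ)..1, F x T := intervalIntegral.integral_nonneg h01 hF
  have e6 : ∫ t in (0:ℝ)..T, (G 0 t - G 1 t) = - ∫ t in (0:ℝ)..T, (G 1 t - G 0 t) := by
    rw [← intervalIntegral.integral_neg]; simp
  linarith

lemma aux_energy (F Ft G Gx : ℝ → ℝ → ℝ) (K T : ℝ) (hT : 0 ≤ T)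
    (cF : ContinuousOn (fun p : ℝ × ℝ => F p.1 p.2) (Icc 0 1 ×ˢ Ici 0))
    (cFt : ContinuousOn (fun p : ℝ × ℝ => Ft p.1 p.2) (Icc 0 1 ×ˢ Ici 0))
    (cG : ContinuousOn (fun p : ℝ × ℝ => G p.1 p.2) (Icc 0 1 ×ˢ Ici 0))
    (cGx : ContinuousOn (fun p : ℝ × ℝ => Gx p.1 p.2) (Icc 0 1 ×ˢ Ici 0))
    (hFt : ∀ x ∈ Icc (0:ℝ) 1, ∀ t ∈ Ici (0:ℝ),
      HasDerivWithinAt (fun s => F x s) (Ft x t) (Ici 0) t)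
    (hGx : ∀ t ∈ Ici (0:ℝ), ∀ x ∈ Icc (0:ℝ) 1,
      HasDerivWithinAt (fun s => G s t) (Gx x t) (Icc 0 1) x)
    (hle : ∀ x ∈ Ioo (0:ℝ) 1, ∀ t ∈ Ioi (0:ℝ), Ft x t ≤ Gx x t + K * F x t)
    (hF : ∀ x t, 0 ≤ F x t) :
    ∫ t in (0:ℝ)..T, (G 0 t - G 1 t)
      ≤ K * (∫ t in (0:ℝ)..T, ∫ x in (0:ℝ)..1, F x t) + ∫ x in (0:ℝ)..1, F x 0 := by
  have h01 : (0:ℝ) ≤ 1 := zero_le_one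
  let a : ℝ → ℝ := fun x => max 0 (min x 1)
  let b : ℝ → ℝ := fun t => max 0 t
  have ha : ∀ x ∈ Icc (0:ℝ) 1, a x = x := fun x hx => by simp [a, hx.1, hx.2]
  have hb : ∀ t ∈ Ici (0:ℝ), b t = t := fun t ht => by simpa [b] using ht
  have cl : ∀ H : ℝ → ℝ → ℝ, ContinuousOn (fun p : ℝ × ℝ => H p.1 p.2) (Icc 0 1 ×ˢ Ici 0) →
      Continuous (Function.uncurry (fun x t => H (a x) (b t))) := by
    intro H hH
    refine hH.comp_continuous (f := fun p : ℝ × ℝ => (a p.1, b p.2)) (by fun_prop) ?_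
    intro p
    simp [a, b]
  have key := aux_energy0 (fun x t => F (a x) (b t)) (fun x t => Ft (a x) (b t))
    (fun x t => G (a x) (b t)) (fun x t => Gx (a x) (b t)) K T hT (cl F cF) (cl Ft cFt)
    (cl G cG) (cl Gx cGx) ?_ ?_ ?_ ?_
  · have i1 : ∫ t in (0:ℝ)..T, (G (a 0) (b t) - G (a 1) (b t))
        = ∫ t in (0:ℝ)..T, (G 0 t - G 1 t) := by
      apply intervalIntegral.integral_congr
      intro t ht
      rw [uIcc_of_le hT] at ht
      simp only [ha 0 (by simp), ha 1 (by simp), hb t ht.1]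
    have i2 : ∫ t in (0:ℝ)..T, ∫ x in (0:ℝ)..1, F (a x) (b t)
        = ∫ t in (0:ℝ)..T, ∫ x in (0:ℝ)..1, F x t := by
      apply intervalIntegral.integral_congr
      intro t ht
      rw [uIcc_of_le hT] at ht
      apply intervalIntegral.integral_congr
      intro x hx
      rw [uIcc_of_le h01] at hx
      simp only [ha x hx, hb t ht.1]
    have i3 : ∫ x in (0:ℝ)..1, F (a x) (b 0) = ∫ x in (0:ℝ)..1, F x 0 := by
      apply intervalIntegral.integral_congr
      intro x hx
      rw [uIcc_of_le h01] at hx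
      simp only [ha x hx, hb 0 (by simp)]
    rwa [i1, i2, i3] at key
  · intro x hx t ht
    simp only [ha x hx, hb t ht.1.le]
    have hn := Ici_mem_nhds ht.1
    refine ((hFt x hx t ht.1.le).hasDerivAt hn).congr_of_eventuallyEq ?_
    filter_upwards [hn] with s hs
    rw [hb s hs]
  · intro t ht x hx
    simp only [ha x (Ioo_subset_Icc_self hx), hb t ht.1]
    have hn := Icc_mem_nhds hx.1 hx.2
    refine ((hGx t ht.1 x (Ioo_subset_Icc_self hx)).hasDerivAt hn).congr_of_eventuallyEq ?_
    filter_upwards [hn] with s hs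
    rw [ha s hs]
  · intro x hx t ht
    simp only [ha x (Ioo_subset_Icc_self hx), hb t ht.1.le]
    exact hle x hx t ht.1
  · intro x _
    exact hF _ _

lemma aux_spec (c₁ c₂ a b : ℝ) :
    a * (-c₁ * a + c₁ * b) + b * (c₂ * a - c₂ * b) ≤ specNormM c₁ c₂ * (a ^ 2 + b ^ 2) := by
  let v : EuclideanSpace ℝ (Fin 2) := !₂[a, b]
  let L := Matrix.toEuclideanCLM (𝕜 := ℝ) !![-c₁, c₁; c₂, -c₂]
  have h1 : inner ℝ v (L v) ≤ ‖v‖ * ‖L v‖ := real_inner_le_norm _ _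
  have h2 : ‖L v‖ ≤ specNormM c₁ c₂ * ‖v‖ := L.le_opNorm v
  have h3 : inner ℝ v (L v) = a * (-c₁ * a + c₁ * b) + b * (c₂ * a - c₂ * b) := by
    simp [v, L, Matrix.toEuclideanCLM_toLp, PiLp.inner_apply, Fin.sum_univ_two, Matrix.mulVec,
      dotProduct]
    ring
  have h4 : ‖v‖ ^ 2 = a ^ 2 + b ^ 2 := by
    simp [v, EuclideanSpace.norm_sq_eq, Fin.sum_univ_two]
  rw [← h3, ← h4]
  nlinarith [norm_nonneg v]

/-- along any `C¹` solution `ξ` of the shifted error system whose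
space-time `L²` energy is finite, the boundary trace `t ↦ ξ^c(0,t)` is
square-integrable on `(0,∞)` and
`u₂ ∫₀^∞ |ξ^c(0,t)|² dt ≤ (2|M|₂ + 2λ₀) ∫₀^∞ ∫₀¹ |ξ(x,t)|² dx dt + ∫₀¹ |ξ(x,0)|² dx`. -/
theorem boundary_trace_square_integrable
    (u₁ u₂ c₁ c₂ lam0 : ℝ) (hu₁ : 0 < u₁) (hu₂ : 0 < u₂) (hc₁ : 0 < c₁) (hc₂ : 0 < c₂)
    (hlam0 : 0 < lam0)
    (ξh ξc ξhx ξht ξcx ξct : ℝ → ℝ → ℂ)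
    (hch : ContinuousOn (fun p : ℝ × ℝ => ξh p.1 p.2) (Icc 0 1 ×ˢ Ici 0))
    (hcc : ContinuousOn (fun p : ℝ × ℝ => ξc p.1 p.2) (Icc 0 1 ×ˢ Ici 0))
    (hchx : ContinuousOn (fun p : ℝ × ℝ => ξhx p.1 p.2) (Icc 0 1 ×ˢ Ici 0))
    (hcht : ContinuousOn (fun p : ℝ × ℝ => ξht p.1 p.2) (Icc 0 1 ×ˢ Ici 0))
    (hccx : ContinuousOn (fun p : ℝ × ℝ => ξcx p.1 p.2) (Icc 0 1 ×ˢ Ici 0))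
    (hcct : ContinuousOn (fun p : ℝ × ℝ => ξct p.1 p.2) (Icc 0 1 ×ˢ Ici 0))
    (hdhx : ∀ t ∈ Ici (0:ℝ), ∀ x ∈ Icc (0:ℝ) 1,
      HasDerivWithinAt (fun s => ξh s t) (ξhx x t) (Icc 0 1) x)
    (hdht : ∀ x ∈ Icc (0:ℝ) 1, ∀ t ∈ Ici (0:ℝ),
      HasDerivWithinAt (fun s => ξh x s) (ξht x t) (Ici 0) t)
    (hdcx : ∀ t ∈ Ici (0:ℝ), ∀ x ∈ Icc (0:ℝ) 1,
      HasDerivWithinAt (fun s => ξc s t) (ξcx x t) (Icc 0 1) x)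
    (hdct : ∀ x ∈ Icc (0:ℝ) 1, ∀ t ∈ Ici (0:ℝ),
      HasDerivWithinAt (fun s => ξc x s) (ξct x t) (Ici 0) t)
    (hpde : ∀ x ∈ Ioo (0:ℝ) 1, ∀ t ∈ Ioi (0:ℝ),
      ξht x t = -(u₁ : ℂ) * ξhx x t - (c₁ : ℂ) * (ξh x t - ξc x t) + (lam0 : ℂ) * ξh x t ∧
      ξct x t = (u₂ : ℂ) * ξcx x t + (c₂ : ℂ) * (ξh x t - ξc x t) + (lam0 : ℂ) * ξc x t)
    (hbc : ∀ t : ℝ, 0 ≤ t → ξh 0 t = 0 ∧ ξc 1 t = 0)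
    -- finite space-time `L²` energy:
    (hL2 : IntegrableOn
      (fun t => ∫ x in (0:ℝ)..1, (‖ξh x t‖ ^ 2 + ‖ξc x t‖ ^ 2)) (Ioi 0) volume) :
    IntegrableOn (fun t => ‖ξc 0 t‖ ^ 2) (Ioi 0) volume ∧
    u₂ * ∫ t in Ioi (0:ℝ), ‖ξc 0 t‖ ^ 2
      ≤ (2 * specNormM c₁ c₂ + 2 * lam0)
          * (∫ t in Ioi (0:ℝ), ∫ x in (0:ℝ)..1, (‖ξh x t‖ ^ 2 + ‖ξc x t‖ ^ 2))
        + ∫ x in (0:ℝ)..1, (‖ξh x 0‖ ^ 2 + ‖ξc x 0‖ ^ 2) := by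
  have cn : ∀ f : ℝ → ℝ → ℂ, ContinuousOn (fun p : ℝ × ℝ => f p.1 p.2) (Icc 0 1 ×ˢ Ici 0) →
      ContinuousOn (fun p : ℝ × ℝ => ‖f p.1 p.2‖ ^ 2) (Icc 0 1 ×ˢ Ici 0) :=
    fun f hf => hf.norm.pow 2
  have ci : ∀ f g : ℝ → ℝ → ℂ, ContinuousOn (fun p : ℝ × ℝ => f p.1 p.2) (Icc 0 1 ×ˢ Ici 0) →
      ContinuousOn (fun p : ℝ × ℝ => g p.1 p.2) (Icc 0 1 ×ˢ Ici 0) →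
      ContinuousOn (fun p : ℝ × ℝ => 2 * inner ℝ (f p.1 p.2) (g p.1 p.2)) (Icc 0 1 ×ˢ Ici 0) :=
    fun f g hf hg => continuousOn_const.mul (ContinuousOn.inner (𝕜 := ℝ) hf hg)
  set K := 2 * specNormM c₁ c₂ + 2 * lam0 with hK
  have hK0 : 0 ≤ K := by
    have : 0 ≤ specNormM c₁ c₂ := norm_nonneg _
    positivity
  have key : ∀ T : ℝ, 0 ≤ T → _ := fun T hT => aux_energy
    (fun x t => ‖ξh x t‖ ^ 2 + ‖ξc x t‖ ^ 2)
    (fun x t => 2 * inner ℝ (ξh x t) (ξht x t) + 2 * inner ℝ (ξc x t) (ξct x t))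
    (fun x t => -u₁ * ‖ξh x t‖ ^ 2 + u₂ * ‖ξc x t‖ ^ 2)
    (fun x t => -u₁ * (2 * inner ℝ (ξh x t) (ξhx x t)) + u₂ * (2 * inner ℝ (ξc x t) (ξcx x t)))
    K T hT ((cn _ hch).add (cn _ hcc)) ((ci _ _ hch hcht).add (ci _ _ hcc hcct))
    ((continuousOn_const.mul (cn _ hch)).add (continuousOn_const.mul (cn _ hcc)))
    ((continuousOn_const.mul (ci _ _ hch hchx)).add (continuousOn_const.mul (ci _ _ hcc hccx)))
    (fun x hx t ht => (hdht x hx t ht).norm_sq.add (hdct x hx t ht).norm_sq)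
    (fun t ht x hx => ((hdhx t ht x hx).norm_sq.const_mul _).add
      ((hdcx t ht x hx).norm_sq.const_mul _))
    (by
      intro x hx t ht
      obtain ⟨p1, p2⟩ := hpde x hx t ht
      rw [p1, p2]
      have r1 := aux_spec c₁ c₂ (ξh x t).re (ξc x t).re
      have r2 := aux_spec c₁ c₂ (ξh x t).im (ξc x t).im
      simp only [Complex.inner, ← Complex.normSq_eq_norm_sq, Complex.normSq_apply, hK]
      simp
      nlinarith)
    (fun x t => by positivity)
  have cb : ContinuousOn (fun t => ‖ξc 0 t‖ ^ 2) (Ici 0) := by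
    refine (cn _ hcc).comp (f := fun t : ℝ => ((0:ℝ), t)) (by fun_prop) ?_
    intro t ht
    exact ⟨by simp, ht⟩
  have cb1 : ContinuousOn (fun t => ‖ξh 1 t‖ ^ 2) (Ici 0) := by
    refine (cn _ hch).comp (f := fun t : ℝ => ((1:ℝ), t)) (by fun_prop) ?_
    intro t ht
    exact ⟨by simp, ht⟩
  have ii : ∀ f : ℝ → ℝ, ContinuousOn f (Ici 0) → ∀ T : ℝ, 0 ≤ T →
      IntervalIntegrable f volume 0 T := fun f hf T hT =>
    (hf.mono (by rw [uIcc_of_le hT]; exact Icc_subset_Ici_self)).intervalIntegrable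
  set E : ℝ → ℝ := fun t => ∫ x in (0:ℝ)..1, (‖ξh x t‖ ^ 2 + ‖ξc x t‖ ^ 2) with hE
  have hE0 : ∀ t, 0 ≤ E t := fun t =>
    intervalIntegral.integral_nonneg zero_le_one (fun x _ => by positivity)
  have bound : ∀ T : ℝ, 0 ≤ T →
      u₂ * ∫ t in (0:ℝ)..T, ‖ξc 0 t‖ ^ 2 ≤ K * (∫ t in Ioi (0:ℝ), E t) + E 0 := by
    intro T hT
    have k := key T hT
    have l1 : u₂ * ∫ t in (0:ℝ)..T, ‖ξc 0 t‖ ^ 2 ≤ ∫ t in (0:ℝ)..T,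
        (-u₁ * ‖ξh 0 t‖ ^ 2 + u₂ * ‖ξc 0 t‖ ^ 2 - (-u₁ * ‖ξh 1 t‖ ^ 2 + u₂ * ‖ξc 1 t‖ ^ 2)) := by
      have : ∫ t in (0:ℝ)..T,
        (-u₁ * ‖ξh 0 t‖ ^ 2 + u₂ * ‖ξc 0 t‖ ^ 2 - (-u₁ * ‖ξh 1 t‖ ^ 2 + u₂ * ‖ξc 1 t‖ ^ 2))
        = ∫ t in (0:ℝ)..T, (u₂ * ‖ξc 0 t‖ ^ 2 + u₁ * ‖ξh 1 t‖ ^ 2) := by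
        apply intervalIntegral.integral_congr
        intro t ht
        rw [uIcc_of_le hT] at ht
        simp [(hbc t ht.1).1, (hbc t ht.1).2]
      rw [this, intervalIntegral.integral_add ((ii _ cb T hT).const_mul _)
        ((ii _ cb1 T hT).const_mul _), intervalIntegral.integral_const_mul]
      have : 0 ≤ ∫ t in (0:ℝ)..T, u₁ * ‖ξh 1 t‖ ^ 2 :=
        intervalIntegral.integral_nonneg hT (fun x _ => by positivity)
      linarith
    have l2 : ∫ t in (0:ℝ)..T, E t ≤ ∫ t in Ioi (0:ℝ), E t := by
      rw [intervalIntegral.integral_of_le hT]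
      exact setIntegral_mono_set hL2 (Filter.Eventually.of_forall hE0)
        (Filter.Eventually.of_forall fun t ht => ht.1)
    have l3 := mul_le_mul_of_nonneg_left l2 hK0
    linarith
  have hint : IntegrableOn (fun t => ‖ξc 0 t‖ ^ 2) (Ioi 0) volume := by
    refine integrableOn_Ioi_of_intervalIntegral_norm_bounded (l := Filter.atTop) (b := fun T : ℝ => T)
      ((K * (∫ t in Ioi (0:ℝ), E t) + E 0) / u₂) 0 ?_ Filter.tendsto_id ?_
    · intro T
      exact ((cb.mono Icc_subset_Ici_self).integrableOn_Icc).mono_set Ioc_subset_Icc_self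
    · filter_upwards [Filter.eventually_ge_atTop 0] with T hT
      rw [le_div_iff₀ hu₂, mul_comm]
      simpa using bound T hT
  refine ⟨hint, ?_⟩
  refine le_of_tendsto ((intervalIntegral_tendsto_integral_Ioi 0 hint Filter.tendsto_id).const_mul u₂) ?_
  filter_upwards [Filter.eventually_ge_atTop 0] with T hT
  exact bound T hT
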